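/- Let K ∈ M_n^× with s_K < t_K, where s_K = min{k ∈ [1,n+1] : k ∉ K} and t_K = max{k ∈ [1,n+1] : k ∈ K}. Then for every pair 1 ≤ i < j ≤ n+1, the complex vector space of homomorphisms of representations Hom(e((i,j);Ω(K)), e((s_K,t_K);Ω(K))) has dimension 1 if i ∉ K and j ∈ K, and dimension 0 otherwise. -/

import Mathlib

/-- A homomorphism of representations `e((i,j);Ω) → e((i',j');Ω)` of the linearly oriented
quiver on vertices `1,…,n` (the orientation `Ω` given by `dir`, where `dir k = true` means
the edge between `k` and `k+1` is the arrow `k → k+1`, and `dir k = false` means `k+1 → k`).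
Interval representations have vertex space `ℂ` exactly on the supports `S₁`, `S₂`, the
structure map along an arrow being the identity when both endpoints carry `ℂ` and `0`
otherwise; a homomorphism is a tuple of linear maps (identified with scalars `φ k ∈ ℂ` when
both spaces are `ℂ`, and `0` otherwise) making all squares commute. -/
def IsHom (n : ℕ) (dir : ℕ → Bool) (S₁ S₂ : Finset ℕ) (φ : ℕ → ℂ) : Prop :=
  (∀ k : ℕ, ¬(k ∈ S₁ ∧ k ∈ S₂) → φ k = 0) ∧
  ∀ k : ℕ, 1 ≤ k → k ≤ n - 1 →
    (if (if dir k then k else k + 1) ∈ S₁ ∧ (if dir k then k + 1 else k) ∈ S₁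
      then φ (if dir k then k + 1 else k) else 0) =
    (if (if dir k then k else k + 1) ∈ S₂ ∧ (if dir k then k + 1 else k) ∈ S₂
      then φ (if dir k then k else k + 1) else 0)

/-- let `K ∈ M_n^×` with `s_K < t_K` (`s_K` the least element of `[1,n+1]`
not in `K`, `t_K` the greatest element of `K`), and let `Ω(K)` be the orientation (encoded
by `dir`) whose source set is `I_t` and whose sink set is `I_s` (a vertex `v ∈ [1,n]` is a
source iff no arrow points into it, i.e. `(2 ≤ v → dir (v−1) = false) ∧ (v ≤ n−1 → dir v =
true)`, and dually for sinks; `I_t = out(K) ∪ {1 if min K ≥ 3} ∪ {n if n+1 ∈ K}` and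
`I_s = in(K) ∪ {1 if 1 ∈ K} ∪ {n if t_K ≤ n−1}`, where `out(K) = {v ∈ [1,n] : v ∈ K, v+1 ∉ K}`
and `in(K) = {v ∈ [1,n] : v ∉ K, v+1 ∈ K}`).  Then for every `1 ≤ i < j ≤ n+1`, the space
`Hom(e((i,j);Ω(K)), e((s_K,t_K);Ω(K)))` has dimension `1` if `i ∉ K` and `j ∈ K` (it is a
complex line), and dimension `0` otherwise. -/
theorem stmt19 (n : ℕ) (hn : 1 ≤ n)
    (K : Finset ℕ) (hK : K ⊆ Finset.Icc 1 (n + 1)) (hKne : K ≠ ∅)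
    (hKfull : K ≠ Finset.Icc 1 (n + 1))
    (sK tK : ℕ)
    (hsK1 : sK ∈ Finset.Icc 1 (n + 1)) (hsK2 : sK ∉ K)
    (hsK3 : ∀ k ∈ Finset.Icc 1 (n + 1), k ∉ K → sK ≤ k)
    (htK1 : tK ∈ K) (htK2 : ∀ k ∈ K, k ≤ tK)
    (hst : sK < tK)
    (dir : ℕ → Bool)
    (hsource : ∀ v : ℕ, 1 ≤ v → v ≤ n →
      (((2 ≤ v → dir (v - 1) = false) ∧ (v ≤ n - 1 → dir v = true)) ↔
        ((v ∈ K ∧ v + 1 ∉ K) ∨ (v = 1 ∧ 1 ∉ K ∧ 2 ∉ K) ∨ (v = n ∧ n + 1 ∈ K))))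
    (hsink : ∀ v : ℕ, 1 ≤ v → v ≤ n →
      (((2 ≤ v → dir (v - 1) = true) ∧ (v ≤ n - 1 → dir v = false)) ↔
        ((v ∉ K ∧ v + 1 ∈ K) ∨ (v = 1 ∧ 1 ∈ K) ∨ (v = n ∧ n ∉ K ∧ n + 1 ∉ K))))
    (i j : ℕ) (hij1 : 1 ≤ i) (hij2 : i < j) (hij3 : j ≤ n + 1) :
    if i ∉ K ∧ j ∈ K then
      ∃ φ : ℕ → ℂ, IsHom n dir (Finset.Icc i (j - 1)) (Finset.Icc sK (tK - 1)) φ ∧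
        φ ≠ 0 ∧
        ∀ ψ : ℕ → ℂ, IsHom n dir (Finset.Icc i (j - 1)) (Finset.Icc sK (tK - 1)) ψ →
          ∃ c : ℂ, ψ = c • φ
    else
      ∀ ψ : ℕ → ℂ, IsHom n dir (Finset.Icc i (j - 1)) (Finset.Icc sK (tK - 1)) ψ → ψ = 0 := by
  have hdir : ∀ k : ℕ, 1 ≤ k → k ≤ n - 1 → (dir k = true ↔ k + 1 ∉ K) := by
    intro k hk
    induction k, hk using Nat.le_induction with
    | base =>
      intro h
      have h1 := hsource 1 le_rfl hn
      have e : ¬ (1 = n) := by omega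
      simp [h, e] at h1
      rw [h1]
      tauto
    | succ k hk ih =>
      intro h
      have ih := ih (by omega)
      have h1 := hsource (k + 1) (by omega) (by omega)
      have h2 := hsink (k + 1) (by omega) (by omega)
      have e : ¬ (k + 1 = n) := by omega
      have e' : 2 ≤ k + 1 := by omega
      have e'' : ¬ (k = 0) := by omega
      simp only [h, e, e', Nat.add_sub_cancel, true_imp_iff, false_and, or_false,
        Nat.add_eq_right, e''] at h1 h2
      cases hd : dir (k + 1) <;> cases hd' : dir k <;> simp_all
  obtain ⟨hs1, hs2⟩ := Finset.mem_Icc.1 hsK1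
  have ht1 := (Finset.mem_Icc.1 (hK htK1)).2
  have hT : ∀ k, 1 ≤ k → k ≤ n - 1 → k + 1 ∉ K → dir k = true := fun k a b c => (hdir k a b).2 c
  have hF : ∀ k, 1 ≤ k → k ≤ n - 1 → k + 1 ∈ K → dir k = false := fun k a b c => by
    have := hdir k a b
    cases h : dir k <;> simp_all
  have key : ∀ φ : ℕ → ℂ, IsHom n dir (Finset.Icc i (j - 1)) (Finset.Icc sK (tK - 1)) φ ↔
      ((∀ k : ℕ, ¬((i ≤ k ∧ k < j) ∧ (sK ≤ k ∧ k < tK)) → φ k = 0) ∧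
      (∀ k, 1 ≤ k → k ≤ n - 1 → k + 1 ∉ K → (if i ≤ k ∧ k + 1 < j then φ (k+1) else 0) =
        (if sK ≤ k ∧ k + 1 < tK then φ k else 0)) ∧
      (∀ k, 1 ≤ k → k ≤ n - 1 → k + 1 ∈ K → (if i ≤ k ∧ k + 1 < j then φ k else 0) =
        (if sK ≤ k ∧ k + 1 < tK then φ (k+1) else 0))) := by
    intro φ
    have m1 : ∀ k, k ∈ Finset.Icc i (j-1) ↔ (i ≤ k ∧ k < j) := by
      intro k; rw [Finset.mem_Icc]; omega
    have m2 : ∀ k, k ∈ Finset.Icc sK (tK-1) ↔ (sK ≤ k ∧ k < tK) := by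
      intro k; rw [Finset.mem_Icc]; omega
    have c1 : ∀ a b k : ℕ, ((a ≤ k ∧ k < b) ∧ a ≤ k + 1 ∧ k + 1 < b) ↔ (a ≤ k ∧ k + 1 < b) := by
      intros; omega
    have c2 : ∀ a b k : ℕ, ((a ≤ k + 1 ∧ k + 1 < b) ∧ a ≤ k ∧ k < b) ↔ (a ≤ k ∧ k + 1 < b) := by
      intros; omega
    unfold IsHom
    simp only [m1, m2]
    refine and_congr Iff.rfl ⟨fun h => ⟨fun k a b c => ?_, fun k a b c => ?_⟩, fun h k a b => ?_⟩
    · have := h k a b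
      simpa only [hT k a b c, if_true, c1] using this
    · have := h k a b
      simpa only [hF k a b c, if_false, c2, Bool.false_eq_true] using this
    · by_cases c : k + 1 ∈ K
      · simpa only [hF k a b c, if_false, c2, Bool.false_eq_true] using h.2 k a b c
      · simpa only [hT k a b c, if_true, c1] using h.1 k a b c
  have cst : ∀ ψ : ℕ → ℂ, IsHom n dir (Finset.Icc i (j - 1)) (Finset.Icc sK (tK - 1)) ψ →
      ∀ x y, max i sK ≤ x → x ≤ y → y < min j tK → ψ y = ψ x := by
    intro ψ h x y hx hxy
    obtain ⟨-, h1, h2⟩ := (key ψ).1 h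
    induction y, hxy using Nat.le_induction with
    | base => intro _; rfl
    | succ k hk ih =>
      intro hl
      rw [← ih (by omega)]
      have e1 : i ≤ k ∧ k + 1 < j := by omega
      have e2 : sK ≤ k ∧ k + 1 < tK := by omega
      by_cases c : k + 1 ∈ K
      · have := h2 k (by omega) (by omega) c
        rw [if_pos e1, if_pos e2] at this
        exact this.symm
      · have := h1 k (by omega) (by omega) c
        rwa [if_pos e1, if_pos e2] at this
  split_ifs with hc
  · obtain ⟨hi, hj⟩ := hc
    have hsi : sK ≤ i := hsK3 i (Finset.mem_Icc.2 ⟨hij1, by omega⟩) hi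
    have hjt : j ≤ tK := htK2 j hj
    refine ⟨fun k => if i ≤ k ∧ k < j then 1 else 0, ?_, ?_, ?_⟩
    · rw [key]
      refine ⟨fun k h => if_neg (by omega), fun k a b c => ?_, fun k a b c => ?_⟩
      · have : k + 1 ≠ j := by rintro rfl; exact c hj
        split_ifs <;> first | rfl | omega
      · have : k + 1 ≠ i := by rintro rfl; exact hi c
        split_ifs <;> first | rfl | omega
    · intro h
      have := congrFun h i
      simp [hij2] at this
    · intro ψ h
      refine ⟨ψ i, funext fun k => ?_⟩
      by_cases hk : i ≤ k ∧ k < j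
      · simp only [Pi.smul_apply, if_pos hk, smul_eq_mul, mul_one]
        exact cst ψ h i k (by omega) hk.1 (by omega)
      · simp only [Pi.smul_apply, if_neg hk, smul_zero]
        exact ((key ψ).1 h).1 k (by omega)
  · intro ψ h
    obtain ⟨h0, h1, h2⟩ := (key ψ).1 h
    funext x
    by_cases hx : (i ≤ x ∧ x < j) ∧ (sK ≤ x ∧ x < tK)
    swap
    · exact h0 x hx
    by_cases hi : i ∈ K
    · have e := cst ψ h (max i sK) x le_rfl (by omega) (by omega)
      rw [e]
      have hne : i ≠ sK := by rintro rfl; exact hsK2 hi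
      rcases lt_or_gt_of_ne hne with hl | hl
      · have := h1 (sK - 1) (by omega) (by omega) (by rwa [Nat.sub_add_cancel hs1])
        rw [Nat.sub_add_cancel hs1, if_pos (by omega), if_neg (by omega)] at this
        rw [max_eq_right hl.le]; exact this
      · have := h2 (i - 1) (by omega) (by omega) (by rwa [Nat.sub_add_cancel hij1])
        rw [Nat.sub_add_cancel hij1, if_neg (by omega), if_pos (by omega)] at this
        rw [max_eq_left hl.le]; exact this.symm
    · have hj : j ∉ K := fun hj => hc ⟨hi, hj⟩
      have hne : j ≠ tK := by rintro rfl; exact hj htK1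
      have e := cst ψ h x (min j tK - 1) (by omega) (by omega) (by omega)
      rw [← e]
      rcases lt_or_gt_of_ne hne with hl | hl
      · rw [min_eq_left hl.le]
        have s1 : j - 1 + 1 = j := by omega
        have := h1 (j - 1) (by omega) (by omega) (by rwa [s1])
        rw [s1, if_neg (by omega), if_pos (by omega)] at this
        exact this.symm
      · rw [min_eq_right hl.le]
        have s1 : tK - 1 + 1 = tK := by omega
        have := h2 (tK - 1) (by omega) (by omega) (by rwa [s1])
        rw [s1, if_pos (by omega), if_neg (by omega)] at this
        exact this
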